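/- Let 0 ≤ δ < 1, M ≥ 1, and let γ ≥ 1 be real. Let V : ℝ → Matrix(M, M, ℂ) be continuous and 2π-periodic with V(x) Hermitian and positive semidefinite for every x. Let P act componentwise by (Pψ)(x) = ψ(x) − (1/(2π)) ∫_0^{2π} ψ(t) dt. Suppose φ_1, …, φ_N : ℝ → ℂ^M are C² functions, 2π-periodic, with ∫_0^{2π} φ_n(t) dt = 0, orthonormal in L²((0, 2π); ℂ^M), and for each n there is μ_n > 0 such that −φ_n''(x) − δ φ_n(x) − (P(V · (Pφ_n)))(x) = −μ_n φ_n(x) for all x. Then ∑_{n=1}^N μ_n^γ ≤ (π/√3) · K₂(δ) · (Γ(γ+1)/(2√π · Γ(γ+3/2))) · ∫_0^{2π} Tr[V(x)^{γ + 1/2}] dx. -/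

import Mathlib

open Real MeasureTheory ComplexOrder

/-- The sharp constant `K₂(β) = sup_{λ>0} (√λ/π) · ∑_{k ∈ ℤ, k ≠ 0} 1/(k² − β + λ)`. -/
noncomputable def K2 (β : ℝ) : ℝ :=
  ⨆ l : Set.Ioi (0 : ℝ),
    Real.sqrt l / π * ∑' k : {k : ℤ // k ≠ 0}, 1 / ((k.1 : ℝ) ^ 2 - β + l)

/-- The projection removing the mean value over `(0, 2π)`, acting componentwise on
vector-valued functions. -/
noncomputable def projP {M : ℕ} (ψ : ℝ → Fin M → ℂ) (x : ℝ) : Fin M → ℂ :=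
  ψ x - (1 / (2 * π)) • ∫ t in (0:ℝ)..(2 * π), ψ t

/-!
Expanding a zero-mean periodic function `u` in a Fourier series and applying Cauchy–Schwarz with
the weights `k² - δ + s²` bounds `|u(x)|²` by `K₂(δ) / 2 · (E(u) / s + s ‖u‖²)`, where `E` is the
quadratic form of `-d²/dx² - δ`. For orthonormal `φₙ` and a unit vector `e`, apply this to
`u = ∑ₙ ⟨e, φₙ(x)⟩ φₙ`: both `‖u‖²` and `⟨u(x), e⟩` equal the density `ρ_e(x)`, so optimizing in `s`
gives `ρ_e(x)³ ≤ K₂(δ)² E(u)` (Eden–Foias). Summing over an eigenbasis of `V(x)`, integrating, and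
using Young's inequality `w ρ - ρ³ / K² ≤ 2 K / (3 √3) · w₊^{3/2}` bounds `∑ₙ (μₙ - τ)₊` by
`∫ Tr (V - τ)₊^{3/2}`, uniformly in the shift `τ`. This is the case `γ = 1` at `τ = 0`; integrating
in `τ` against `τ^{γ-2}` gives `γ > 1` (Aizenman–Lieb), the Beta integrals on the two sides
producing exactly the ratio of the semiclassical constants.
-/

section LatticeSums

lemma one_le_intCast_sq {k : ℤ} (hk : k ≠ 0) : (1 : ℝ) ≤ (k : ℝ) ^ 2 := by
  exact_mod_cast (one_le_sq_iff_one_le_abs k).2 (Int.one_le_abs hk)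

lemma tsum_int_ne_zero_of_even {f : ℤ → ℝ} (hf : f.Even)
    (hsum : Summable fun k : {k : ℤ // k ≠ 0} => f k) :
    ∑' k : {k : ℤ // k ≠ 0}, f k = 2 * ∑' n : ℕ, f (n + 1) := by
  set g : ℤ → ℝ := {k : ℤ | k ≠ 0}.indicator f
  have hg : g.Even := fun k => by simp [g, Set.indicator_apply, hf k]
  have hg_pnat (n : ℕ+) : g n = f n := Set.indicator_of_mem (by simp) f
  have hg_zero : g 0 = 0 := by simp [g]
  calc ∑' k : {k : ℤ // k ≠ 0}, f k = ∑' k, g k := tsum_subtype {k : ℤ | k ≠ 0} f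
    _ = 2 * ∑' n : ℕ+, f n := by
        rw [tsum_int_eq_zero_add_two_mul_tsum_pnat hg (summable_subtype_iff_indicator.1 hsum)]
        simp [hg_zero, hg_pnat]
    _ = 2 * ∑' n : ℕ, f (n + 1) := by
        rw [tsum_pnat_eq_tsum_succ (f := fun n : ℕ => f n)]
        push_cast
        rfl

lemma summable_one_div_intCast_sq_add {l : ℝ} (hl : 0 ≤ l) :
    Summable fun k : {k : ℤ // k ≠ 0} => 1 / ((k.1 : ℝ) ^ 2 + l) := by
  have hsq : Summable fun k : {k : ℤ // k ≠ 0} => 1 / (k.1 : ℝ) ^ 2 :=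
    (Real.summable_one_div_int_pow.2 one_lt_two).comp_injective Subtype.val_injective
  refine hsq.of_nonneg_of_le (fun k => by positivity) fun k => ?_
  have := one_le_intCast_sq k.2
  gcongr
  linarith

lemma div_succ_sq_add_sq_le {s : ℝ} (hs : 0 < s) (n : ℕ) :
    s / (((n : ℝ) + 1) ^ 2 + s ^ 2) ≤ 2 * s / (n + s) - 2 * s / ((n + 1 : ℕ) + s) := by
  have hdiff : 2 * s / (n + s) - 2 * s / ((n + 1 : ℕ) + s) = s / ((n + s) * (n + 1 + s) / 2) := by
    push_cast
    field_simp
    ring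
  rw [hdiff]
  gcongr
  nlinarith [sq_nonneg ((n : ℝ) + 1 - s), n.cast_nonneg (α := ℝ)]

lemma tsum_div_succ_sq_add_sq_le {s : ℝ} (hs : 0 < s) :
    ∑' n : ℕ, s / (((n : ℝ) + 1) ^ 2 + s ^ 2) ≤ 2 := by
  refine Real.tsum_le_of_sum_range_le (fun n => by positivity) fun n => ?_
  calc ∑ k ∈ Finset.range n, s / (((k : ℝ) + 1) ^ 2 + s ^ 2)
      ≤ ∑ k ∈ Finset.range n, (2 * s / (k + s) - 2 * s / ((k + 1 : ℕ) + s)) :=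
        Finset.sum_le_sum fun k _ => div_succ_sq_add_sq_le hs k
    _ = 2 - 2 * s / (n + s) := by
        rw [Finset.sum_range_sub' fun k : ℕ => 2 * s / ((k : ℝ) + s)]
        simp [hs.ne']
    _ ≤ 2 := sub_le_self _ (by positivity)

lemma sqrt_mul_tsum_one_div_intCast_sq_add_le {l : ℝ} (hl : 0 < l) :
    √l * ∑' k : {k : ℤ // k ≠ 0}, 1 / ((k.1 : ℝ) ^ 2 + l) ≤ 4 := by
  have heven : Function.Even fun k : ℤ => 1 / ((k : ℝ) ^ 2 + l) := fun k => by simp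
  rw [tsum_int_ne_zero_of_even heven (summable_one_div_intCast_sq_add hl.le), mul_left_comm,
    ← tsum_mul_left]
  have hbound := tsum_div_succ_sq_add_sq_le (Real.sqrt_pos.2 hl)
  rw [Real.sq_sqrt hl.le] at hbound
  calc 2 * ∑' n : ℕ, √l * (1 / (((n + 1 : ℤ) : ℝ) ^ 2 + l)) ≤ 2 * 2 := by
        push_cast
        simpa only [mul_one_div] using mul_le_mul_of_nonneg_left hbound zero_le_two
    _ = 4 := by norm_num

end LatticeSums

section K2

variable {δ : ℝ}

lemma intCast_sq_sub_add_pos (hδ : δ < 1) {k : ℤ} (hk : k ≠ 0) {l : ℝ} (hl : 0 ≤ l) :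
    0 < (k : ℝ) ^ 2 - δ + l := by
  linarith [one_le_intCast_sq hk]

lemma one_div_intCast_sq_sub_add_le (hδ : δ < 1) {k : ℤ} (hk : k ≠ 0) {l : ℝ} (hl : 0 ≤ l) :
    1 / ((k : ℝ) ^ 2 - δ + l) ≤ (1 - max δ 0)⁻¹ * (1 / ((k : ℝ) ^ 2 + l)) := by
  have hk1 := one_le_intCast_sq hk
  have hmax : 0 < 1 - max δ 0 := sub_pos.2 (max_lt hδ one_pos)
  rw [← one_div, one_div_mul_one_div]
  gcongr
  nlinarith [le_max_left δ 0, le_max_right δ 0]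

lemma summable_one_div_intCast_sq_sub_add (hδ : δ < 1) {l : ℝ} (hl : 0 ≤ l) :
    Summable fun k : {k : ℤ // k ≠ 0} => 1 / ((k.1 : ℝ) ^ 2 - δ + l) :=
  ((summable_one_div_intCast_sq_add hl).mul_left _).of_nonneg_of_le
    (fun k => one_div_nonneg.2 (intCast_sq_sub_add_pos hδ k.2 hl).le)
    fun k => one_div_intCast_sq_sub_add_le hδ k.2 hl

lemma bddAbove_range_K2 (hδ : δ < 1) :
    BddAbove (Set.range fun l : Set.Ioi (0 : ℝ) =>
      √l / π * ∑' k : {k : ℤ // k ≠ 0}, 1 / ((k.1 : ℝ) ^ 2 - δ + l)) := by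
  refine ⟨(1 - max δ 0)⁻¹ * 4 / π, ?_⟩
  rintro _ ⟨⟨l, hl : 0 < l⟩, rfl⟩
  have hmax : 0 < 1 - max δ 0 := sub_pos.2 (max_lt hδ one_pos)
  calc √l / π * ∑' k : {k : ℤ // k ≠ 0}, 1 / ((k.1 : ℝ) ^ 2 - δ + l)
      ≤ √l / π * ∑' k : {k : ℤ // k ≠ 0}, (1 - max δ 0)⁻¹ * (1 / ((k.1 : ℝ) ^ 2 + l)) := by
        gcongr with k
        · exact summable_one_div_intCast_sq_sub_add hδ hl.le
        · exact (summable_one_div_intCast_sq_add hl.le).mul_left _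
        · exact one_div_intCast_sq_sub_add_le hδ k.2 hl.le
    _ = (1 - max δ 0)⁻¹ * (√l * ∑' k : {k : ℤ // k ≠ 0}, 1 / ((k.1 : ℝ) ^ 2 + l)) / π := by
        rw [tsum_mul_left]
        ring
    _ ≤ (1 - max δ 0)⁻¹ * 4 / π := by
        gcongr
        exact sqrt_mul_tsum_one_div_intCast_sq_add_le hl

lemma tsum_one_div_le_K2 (hδ : δ < 1) {s : ℝ} (hs : 0 < s) :
    ∑' k : {k : ℤ // k ≠ 0}, 1 / ((k.1 : ℝ) ^ 2 - δ + s ^ 2) ≤ π * K2 δ / s := by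
  have hsup : s / π * ∑' k : {k : ℤ // k ≠ 0}, 1 / ((k.1 : ℝ) ^ 2 - δ + s ^ 2) ≤ K2 δ := by
    simpa only [Real.sqrt_sq hs.le, K2] using
      le_ciSup (bddAbove_range_K2 hδ) ⟨s ^ 2, sq_pos_of_pos hs⟩
  rw [div_mul_eq_mul_div, div_le_iff₀ pi_pos] at hsup
  rw [le_div_iff₀ hs]
  linarith

lemma K2_pos (hδ : δ < 1) : 0 < K2 δ := by
  have htsum : 0 < ∑' k : {k : ℤ // k ≠ 0}, 1 / ((k.1 : ℝ) ^ 2 - δ + 1 ^ 2) :=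
    (summable_one_div_intCast_sq_sub_add hδ (sq_nonneg 1)).tsum_pos
      (fun k => one_div_nonneg.2 (intCast_sq_sub_add_pos hδ k.2 (sq_nonneg 1)).le)
      ⟨1, one_ne_zero⟩ (one_div_pos.2 (intCast_sq_sub_add_pos hδ one_ne_zero (sq_nonneg 1)))
  have hle := tsum_one_div_le_K2 hδ one_pos
  rw [div_one] at hle
  exact pos_of_mul_pos_right (htsum.trans_le hle) pi_pos.le

end K2

section Fourier

lemma periodic_deriv {E : Type*} [NormedAddCommGroup E] [NormedSpace ℝ E] {u : ℝ → E} {c : ℝ}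
    (hu : u.Periodic c) : (deriv u).Periodic c := fun x => by
  rw [← deriv_comp_add_const, show (fun y => u (y + c)) = u from funext hu]

lemma summable_and_sq_tsum_le_of_weight {ι : Type*} {w a : ι → ℝ} (hw : ∀ i, 0 < w i)
    (ha : ∀ i, 0 ≤ a i) (hw_sum : Summable fun i => 1 / w i)
    (hwa_sum : Summable fun i => w i * a i ^ 2) :
    Summable a ∧ (∑' i, a i) ^ 2 ≤ (∑' i, 1 / w i) * ∑' i, w i * a i ^ 2 := by
  have hw_nonneg (i : ι) : 0 ≤ 1 / w i := one_div_nonneg.2 (hw i).le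
  have hwa_nonneg (i : ι) : 0 ≤ w i * a i ^ 2 := mul_nonneg (hw i).le (sq_nonneg _)
  have hmul (i : ι) : √(1 / w i) * √(w i * a i ^ 2) = a i := by
    rw [← Real.sqrt_mul (hw_nonneg i), ← mul_assoc, one_div_mul_cancel (hw i).ne', one_mul,
      Real.sqrt_sq (ha i)]
  have hholder := Real.summable_and_inner_le_Lp_mul_Lq_tsum_of_nonneg Real.HolderConjugate.two_two
    (fun i => (1 / w i).sqrt_nonneg) (fun i => (w i * a i ^ 2).sqrt_nonneg)
  simp only [Real.rpow_two, Real.sq_sqrt (hw_nonneg _), Real.sq_sqrt (hwa_nonneg _), hmul,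
    ← Real.sqrt_eq_rpow] at hholder
  obtain ⟨hsum, hle⟩ := hholder hw_sum hwa_sum
  refine ⟨hsum, ?_⟩
  rw [← Real.sqrt_mul (tsum_nonneg hw_nonneg)] at hle
  exact (Real.le_sqrt (tsum_nonneg ha)
    (mul_nonneg (tsum_nonneg hw_nonneg) (tsum_nonneg hwa_nonneg))).1 hle

variable {T : ℝ} {u : ℝ → ℂ}

lemma norm_le_tsum_norm_fourierCoeffOn (hT : 0 < T) (hu : Continuous u) (hper : u.Periodic T)
    (hsum : Summable fun k => ‖fourierCoeffOn hT u k‖) (x : ℝ) :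
    ‖u x‖ ≤ ∑' k, ‖fourierCoeffOn hT u k‖ := by
  have : Fact (0 < T) := ⟨hT⟩
  let F : C(AddCircle T, ℂ) := ⟨hper.lift, continuous_quot_lift _ hu⟩
  have hF (y : ℝ) : F y = u y := hper.lift_coe y
  have hcoeff (k : ℤ) : fourierCoeff F k = fourierCoeffOn hT u k := by
    simp [fourierCoeff_eq_intervalIntegral _ _ 0, fourierCoeffOn_eq_integral, hF]
  have hnorm (k : ℤ) :
      ‖fourierCoeff F k • fourier k (x : AddCircle T)‖ = ‖fourierCoeffOn hT u k‖ := by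
    rw [norm_smul, fourier_apply, Circle.norm_coe, mul_one, hcoeff]
  have hseries : HasSum (fun k => fourierCoeff F k • fourier k (x : AddCircle T)) (u x) := by
    rw [← hF]
    refine has_pointwise_sum_fourier_series_of_summable (Summable.of_norm ?_) _
    simpa only [hcoeff] using hsum
  calc ‖u x‖ = ‖∑' k, fourierCoeff F k • fourier k (x : AddCircle T)‖ := by rw [hseries.tsum_eq]
    _ ≤ ∑' k, ‖fourierCoeff F k • fourier k (x : AddCircle T)‖ :=
        norm_tsum_le_tsum_norm (by simpa only [hnorm] using hsum)
    _ = ∑' k, ‖fourierCoeffOn hT u k‖ := by simp only [hnorm]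

lemma hasSum_sq_norm_fourierCoeffOn (hT : 0 < T) (hu : Continuous u) :
    HasSum (fun k => ‖fourierCoeffOn hT u k‖ ^ 2) (T⁻¹ * ∫ x in 0..T, ‖u x‖ ^ 2) := by
  have hu_memLp : MemLp u 2 (volume.restrict (Set.Ioc 0 T)) :=
    (memLp_two_iff_integrable_sq_norm hu.aestronglyMeasurable).2
      (hu.norm.pow 2).integrableOn_Ioc
  simpa using hasSum_sq_fourierCoeffOn hT hu_memLp

lemma fourierCoeffOn_zero_eq (hT : 0 < T) : fourierCoeffOn hT u 0 = (1 / T) • ∫ x in 0..T, u x := by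
  simp [fourierCoeffOn_eq_integral]

lemma fourierCoeffOn_deriv (hT : 0 < T) (hu : ContDiff ℝ 1 u) (hper : u.Periodic T) (k : ℤ) :
    fourierCoeffOn hT (deriv u) k = 2 * π * Complex.I * k / T * fourierCoeffOn hT u k := by
  have hderiv (x : ℝ) : HasDerivAt u (deriv u x) x := (hu.differentiable one_ne_zero x).hasDerivAt
  have hint : IntervalIntegrable (deriv u) volume 0 T :=
    (hu.continuous_deriv le_rfl).intervalIntegrable 0 T
  have hend : u T = u 0 := by simpa using hper 0
  rcases eq_or_ne k 0 with rfl | hk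
  · rw [fourierCoeffOn_zero_eq, intervalIntegral.integral_eq_sub_of_hasDerivAt
      (fun x _ => hderiv x) hint]
    simp [hend]
  · rw [fourierCoeffOn_of_hasDerivAt hT hk (fun x _ => hderiv x) hint, hend]
    have : (T : ℂ) ≠ 0 := by exact_mod_cast hT.ne'
    have : (π : ℂ) ≠ 0 := by exact_mod_cast pi_ne_zero
    have : (k : ℂ) ≠ 0 := by exact_mod_cast hk
    push_cast
    field_simp [Complex.I_ne_zero]
    simp

end Fourier

section Interpolation

/-- The form domain of `-d²/dx²` on the zero-mean sector of the circle `ℝ/2πℤ`, restricted to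
`C¹` functions: periodic functions on the line with vanishing integral over one period. -/
structure IsZeroMeanPeriodic {E : Type*} [NormedAddCommGroup E] [NormedSpace ℝ E] (u : ℝ → E) :
    Prop where
  contDiff : ContDiff ℝ 1 u
  periodic : u.Periodic (2 * π)
  integral_eq_zero : ∫ x in 0..2 * π, u x = 0

namespace IsZeroMeanPeriodic

section

variable {E F : Type*} [NormedAddCommGroup E] [NormedSpace ℝ E] [NormedAddCommGroup F]
  [NormedSpace ℝ F] {u : ℝ → E}

lemma intervalIntegrable (hu : IsZeroMeanPeriodic u) : IntervalIntegrable u volume 0 (2 * π) :=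
  hu.contDiff.continuous.intervalIntegrable _ _

lemma hasDerivAt (hu : IsZeroMeanPeriodic u) (x : ℝ) : HasDerivAt u (deriv u x) x :=
  (hu.contDiff.differentiable one_ne_zero x).hasDerivAt

lemma continuous_deriv (hu : IsZeroMeanPeriodic u) : Continuous (deriv u) :=
  hu.contDiff.continuous_deriv le_rfl

lemma clm_comp [CompleteSpace E] [CompleteSpace F] (L : E →L[ℝ] F) (hu : IsZeroMeanPeriodic u) :
    IsZeroMeanPeriodic fun x => L (u x) where
  contDiff := L.contDiff.comp hu.contDiff
  periodic := hu.periodic.comp L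
  integral_eq_zero := by
    rw [L.intervalIntegral_comp_comm hu.intervalIntegrable, hu.integral_eq_zero, map_zero]

lemma sum {ι : Type*} [Fintype ι] {u : ι → ℝ → E} (hu : ∀ n, IsZeroMeanPeriodic (u n)) :
    IsZeroMeanPeriodic fun x => ∑ n, u n x where
  contDiff := ContDiff.sum fun n _ => (hu n).contDiff
  periodic x := Finset.sum_congr rfl fun n _ => (hu n).periodic x
  integral_eq_zero := by
    rw [intervalIntegral.integral_finsetSum fun n _ => (hu n).intervalIntegrable]
    exact Finset.sum_eq_zero fun n _ => (hu n).integral_eq_zero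

end

variable {δ : ℝ} {u : ℝ → ℂ}

lemma fourierCoeffOn_zero (hu : IsZeroMeanPeriodic u) : fourierCoeffOn two_pi_pos u 0 = 0 := by
  rw [fourierCoeffOn_zero_eq, hu.integral_eq_zero, smul_zero]

lemma hasSum_mul_sq_norm_fourierCoeffOn (hu : IsZeroMeanPeriodic u) (δ l : ℝ) :
    HasSum (fun k : {k : ℤ // k ≠ 0} =>
        ((k.1 : ℝ) ^ 2 - δ + l) * ‖fourierCoeffOn two_pi_pos u k‖ ^ 2)
      ((2 * π)⁻¹ * ((∫ y in 0..2 * π, ‖deriv u y‖ ^ 2) - δ * (∫ y in 0..2 * π, ‖u y‖ ^ 2)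
        + l * ∫ y in 0..2 * π, ‖u y‖ ^ 2)) := by
  have hderiv (k : ℤ) : ‖fourierCoeffOn two_pi_pos (deriv u) k‖ ^ 2
      = (k : ℝ) ^ 2 * ‖fourierCoeffOn two_pi_pos u k‖ ^ 2 := by
    rw [fourierCoeffOn_deriv two_pi_pos hu.contDiff hu.periodic, norm_mul, mul_pow]
    congr 1
    simp [abs_of_pos pi_pos]
  have hsum_deriv := hasSum_sq_norm_fourierCoeffOn two_pi_pos hu.continuous_deriv
  simp only [hderiv] at hsum_deriv
  refine (hasSum_subtype_iff_of_support_subset (s := {k : ℤ | k ≠ 0})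
    (f := fun k : ℤ => ((k : ℝ) ^ 2 - δ + l) * ‖fourierCoeffOn two_pi_pos u k‖ ^ 2) ?_).2 ?_
  · rintro k hk rfl
    simp [hu.fourierCoeffOn_zero] at hk
  · convert hsum_deriv.add
      ((hasSum_sq_norm_fourierCoeffOn two_pi_pos hu.contDiff.continuous).mul_left (l - δ))
      using 1
    · ext k
      ring
    · ring

lemma norm_le_tsum_ne_zero_norm_fourierCoeffOn (hu : IsZeroMeanPeriodic u)
    (hsum : Summable fun k : {k : ℤ // k ≠ 0} => ‖fourierCoeffOn two_pi_pos u k‖) (x : ℝ) :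
    ‖u x‖ ≤ ∑' k : {k : ℤ // k ≠ 0}, ‖fourierCoeffOn two_pi_pos u k‖ := by
  have hsum_int : HasSum (fun k => ‖fourierCoeffOn two_pi_pos u k‖)
      (∑' k : {k : ℤ // k ≠ 0}, ‖fourierCoeffOn two_pi_pos u k‖) := by
    refine (hasSum_subtype_iff_of_support_subset (s := {k : ℤ | k ≠ 0}) ?_).1 hsum.hasSum
    rintro k hk rfl
    simp [hu.fourierCoeffOn_zero] at hk
  rw [← hsum_int.tsum_eq]
  exact norm_le_tsum_norm_fourierCoeffOn two_pi_pos hu.contDiff.continuous hu.periodic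
    hsum_int.summable x

lemma sq_norm_le (hu : IsZeroMeanPeriodic u) (hδ : δ < 1) {s : ℝ} (hs : 0 < s) (x : ℝ) :
    ‖u x‖ ^ 2 ≤ K2 δ / 2 * (((∫ y in 0..2 * π, ‖deriv u y‖ ^ 2)
      - δ * ∫ y in 0..2 * π, ‖u y‖ ^ 2) / s + s * ∫ y in 0..2 * π, ‖u y‖ ^ 2) := by
  set A := ∫ y in 0..2 * π, ‖deriv u y‖ ^ 2
  set B := ∫ y in 0..2 * π, ‖u y‖ ^ 2
  have hpos (k : {k : ℤ // k ≠ 0}) : 0 < (k.1 : ℝ) ^ 2 - δ + s ^ 2 :=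
    intCast_sq_sub_add_pos hδ k.2 (sq_nonneg s)
  have henergy := hu.hasSum_mul_sq_norm_fourierCoeffOn δ (s ^ 2)
  have henergy_nonneg := henergy.nonneg fun k => mul_nonneg (hpos k).le (sq_nonneg _)
  obtain ⟨hsum, hcauchy⟩ := summable_and_sq_tsum_le_of_weight hpos (fun k => norm_nonneg _)
    (summable_one_div_intCast_sq_sub_add hδ (sq_nonneg s)) henergy.summable
  rw [henergy.tsum_eq] at hcauchy
  calc ‖u x‖ ^ 2 ≤ (∑' k : {k : ℤ // k ≠ 0}, ‖fourierCoeffOn two_pi_pos u k‖) ^ 2 := by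
        gcongr
        exact hu.norm_le_tsum_ne_zero_norm_fourierCoeffOn hsum x
    _ ≤ (∑' k : {k : ℤ // k ≠ 0}, 1 / ((k.1 : ℝ) ^ 2 - δ + s ^ 2))
          * ((2 * π)⁻¹ * (A - δ * B + s ^ 2 * B)) := hcauchy
    _ ≤ π * K2 δ / s * ((2 * π)⁻¹ * (A - δ * B + s ^ 2 * B)) :=
        mul_le_mul_of_nonneg_right (tsum_one_div_le_K2 hδ hs) henergy_nonneg
    _ = K2 δ / 2 * ((A - δ * B) / s + s * B) := by
        have := pi_ne_zero
        field_simp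

end IsZeroMeanPeriodic

end Interpolation

section EnergyForm

open Matrix

variable {κ : Type*} [Fintype κ]

lemma dotProduct_star_self_eq_ofReal (v : κ → ℂ) : v ⬝ᵥ star v = ((∑ j, ‖v j‖ ^ 2 : ℝ) : ℂ) := by
  simp [dotProduct, Complex.mul_conj']

lemma sq_norm_dotProduct_star_le (v w : κ → ℂ) :
    ‖v ⬝ᵥ star w‖ ^ 2 ≤ (∑ j, ‖v j‖ ^ 2) * ∑ j, ‖w j‖ ^ 2 := by
  refine le_trans ?_ (Finset.sum_mul_sq_le_sq_mul_sq _ _ _)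
  gcongr
  simpa [dotProduct] using norm_sum_le Finset.univ fun j => v j * star (w j)

/-- The inner product of `L²((0, 2π); ℂ^κ)`, linear in the first argument. -/
noncomputable def circleInner (f g : ℝ → κ → ℂ) : ℂ :=
  ∫ x in 0..2 * π, f x ⬝ᵥ star (g x)

/-- Orthonormality in `L²((0, 2π); ℂ^κ)`. -/
def IsCircleOrthonormal {ι : Type*} [DecidableEq ι] (φ : ι → ℝ → κ → ℂ) : Prop :=
  ∀ n m, circleInner (φ n) (φ m) = if n = m then 1 else 0

/-- The sesquilinear form of the operator `-d²/dx² - δ` on the circle. -/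
noncomputable def energyForm (δ : ℝ) (f g : ℝ → κ → ℂ) : ℂ :=
  circleInner (deriv f) (deriv g) - δ * circleInner f g

lemma IsCircleOrthonormal.comp_injective {ι ι' : Type*} [DecidableEq ι] [DecidableEq ι']
    {φ : ι → ℝ → κ → ℂ} (hφ : IsCircleOrthonormal φ) {i : ι' → ι} (hi : i.Injective) :
    IsCircleOrthonormal fun n => φ (i n) := fun n m => by
  simpa only [hi.eq_iff] using hφ (i n) (i m)

lemma intervalIntegrable_dotProduct_star {f g : ℝ → κ → ℂ} (hf : Continuous f)
    (hg : Continuous g) :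
    IntervalIntegrable (fun x => f x ⬝ᵥ star (g x)) volume 0 (2 * π) :=
  (hf.dotProduct hg.star).intervalIntegrable _ _

lemma circleInner_self {f : ℝ → κ → ℂ} (hf : Continuous f) :
    circleInner f f = ((∑ j, ∫ x in 0..2 * π, ‖f x j‖ ^ 2 : ℝ) : ℂ) := by
  rw [circleInner, ← intervalIntegral.integral_finsetSum fun j _ =>
    Continuous.intervalIntegrable (by fun_prop) _ _, ← intervalIntegral.integral_ofReal]
  simp only [dotProduct_star_self_eq_ofReal]

lemma circleInner_const_left (c : κ → ℂ) {g : ℝ → κ → ℂ} (hg : Continuous g) :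
    circleInner (fun _ => c) g = c ⬝ᵥ star (∫ x in 0..2 * π, g x) := by
  have hcomponent (j : κ) : ∫ x in 0..2 * π, g x j = (∫ x in 0..2 * π, g x) j :=
    (ContinuousLinearMap.proj (R := ℝ) (φ := fun _ : κ => ℂ) j).intervalIntegral_comp_comm
      (hg.intervalIntegrable _ _)
  simp only [circleInner, dotProduct, Pi.star_apply, RCLike.star_def]
  rw [intervalIntegral.integral_finsetSum fun j _ =>
    Continuous.intervalIntegrable (by fun_prop) _ _]
  simp only [intervalIntegral.integral_const_mul, intervalIntegral.intervalIntegral_conj,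
    hcomponent]

lemma circleInner_sum_smul {ι : Type*} [Fintype ι] (c : ι → ℂ) {f : ι → ℝ → κ → ℂ}
    (hf : ∀ n, Continuous (f n)) :
    circleInner (fun x => ∑ n, c n • f n x) (fun x => ∑ n, c n • f n x)
      = ∑ n, ∑ m, c n * star (c m) * circleInner (f n) (f m) := by
  have hcont (n m : ι) : Continuous fun x => c n * star (c m) * (f n x ⬝ᵥ star (f m x)) :=
    continuous_const.mul ((hf n).dotProduct (hf m).star)
  simp only [circleInner, ← intervalIntegral.integral_const_mul]
  rw [Finset.sum_congr rfl fun n _ => (intervalIntegral.integral_finsetSum fun m _ =>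
      (hcont n m).intervalIntegrable _ _).symm,
    ← intervalIntegral.integral_finsetSum fun n _ =>
      (continuous_finsetSum _ fun m _ => hcont n m).intervalIntegrable _ _]
  simp only [sum_dotProduct, smul_dotProduct]
  simp only [star_sum, star_smul, dotProduct_sum, dotProduct_smul, smul_eq_mul, Finset.mul_sum,
    mul_assoc]

lemma energyForm_sum_smul {ι : Type*} [Fintype ι] (δ : ℝ) (c : ι → ℂ) {f : ι → ℝ → κ → ℂ}
    (hf : ∀ n, ContDiff ℝ 1 (f n)) :
    energyForm δ (fun x => ∑ n, c n • f n x) (fun x => ∑ n, c n • f n x)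
      = ∑ n, ∑ m, c n * star (c m) * energyForm δ (f n) (f m) := by
  have hderiv : deriv (fun x => ∑ n, c n • f n x) = fun x => ∑ n, c n • deriv (f n) x :=
    funext fun x => (HasDerivAt.fun_sum fun n _ =>
      ((hf n).differentiable one_ne_zero x).hasDerivAt.const_smul (c n)).deriv
  rw [energyForm, hderiv, circleInner_sum_smul c fun n => (hf n).continuous_deriv le_rfl,
    circleInner_sum_smul c fun n => (hf n).continuous]
  simp only [energyForm, mul_sub, Finset.sum_sub_distrib, Finset.mul_sum, mul_left_comm]

lemma circleInner_deriv_left {f g : ℝ → κ → ℂ} (hf : ContDiff ℝ 1 f) (hg : ContDiff ℝ 1 g)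
    (hf_per : f.Periodic (2 * π)) (hg_per : g.Periodic (2 * π)) :
    circleInner (deriv f) g = -circleInner f (deriv g) := by
  have hf' := hf.continuous_deriv le_rfl
  have hg' := hg.continuous_deriv le_rfl
  have hderiv (x : ℝ) : HasDerivAt (fun x => f x ⬝ᵥ star (g x))
      (deriv f x ⬝ᵥ star (g x) + f x ⬝ᵥ star (deriv g x)) x := by
    have hf_x := hasDerivAt_pi.1 (hf.differentiable one_ne_zero x).hasDerivAt
    have hg_x := hasDerivAt_pi.1 (hg.differentiable one_ne_zero x).hasDerivAt
    simpa only [dotProduct, Pi.star_apply, Finset.sum_add_distrib] using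
      HasDerivAt.fun_sum fun j _ => (hf_x j).fun_mul (hg_x j).star
  have hftc := intervalIntegral.integral_eq_sub_of_hasDerivAt (a := 0) (b := 2 * π)
    (fun x _ => hderiv x) ((intervalIntegrable_dotProduct_star hf' hg.continuous).add
      (intervalIntegrable_dotProduct_star hf.continuous hg'))
  rw [intervalIntegral.integral_add (intervalIntegrable_dotProduct_star hf' hg.continuous)
    (intervalIntegrable_dotProduct_star hf.continuous hg'), hf_per.eq, hg_per.eq, sub_self]
    at hftc
  exact eq_neg_of_add_eq_zero_left hftc

end EnergyForm

section EdenFoias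

open Matrix

variable {κ : Type*} [Fintype κ] {δ : ℝ}

lemma IsZeroMeanPeriodic.sum_sq_norm_apply_le {u : ℝ → κ → ℂ} (hu : IsZeroMeanPeriodic u)
    (hδ : δ < 1) {s : ℝ} (hs : 0 < s) (x : ℝ) :
    ∑ j, ‖u x j‖ ^ 2
      ≤ K2 δ / 2 * ((energyForm δ u u).re / s + s * (circleInner u u).re) := by
  have hcomponent (j : κ) : IsZeroMeanPeriodic fun y => u y j :=
    hu.clm_comp (ContinuousLinearMap.proj (R := ℝ) (φ := fun _ : κ => ℂ) j)
  have hderiv (j : κ) (y : ℝ) : deriv (fun y => u y j) y = deriv u y j :=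
    (hasDerivAt_pi.1 (hu.hasDerivAt y) j).deriv
  have hsum := Finset.sum_le_sum fun j (_ : j ∈ Finset.univ) => (hcomponent j).sq_norm_le hδ hs x
  simp only [hderiv] at hsum
  rw [← Finset.mul_sum, Finset.sum_add_distrib, ← Finset.sum_div, Finset.sum_sub_distrib,
    ← Finset.mul_sum, ← Finset.mul_sum] at hsum
  rwa [energyForm, circleInner_self hu.continuous_deriv, circleInner_self hu.contDiff.continuous,
    ← Complex.ofReal_mul, ← Complex.ofReal_sub, Complex.ofReal_re, Complex.ofReal_re]

lemma cube_le_of_forall_sq_le {ρ K Q : ℝ} (hρ : 0 ≤ ρ) (hK : 0 < K)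
    (h : ∀ s > 0, ρ ^ 2 ≤ K / 2 * (Q / s + s * ρ)) : ρ ^ 3 ≤ K ^ 2 * Q := by
  rcases hρ.eq_or_lt with rfl | hρ
  · have hQ : 0 ≤ K / 2 * Q := by simpa using h 1 one_pos
    simpa using mul_nonneg (sq_nonneg K) (nonneg_of_mul_nonneg_right hQ (half_pos hK))
  · have hopt := h (ρ / K) (div_pos hρ hK)
    have hsimp : K / 2 * (Q / (ρ / K) + ρ / K * ρ) = K ^ 2 * Q / (2 * ρ) + ρ ^ 2 / 2 := by
      field_simp
    have hhalf : ρ ^ 2 / 2 ≤ K ^ 2 * Q / (2 * ρ) := by linarith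
    rw [le_div_iff₀ (by positivity)] at hhalf
    linarith

variable {ι : Type*} [Fintype ι]

/-- The density at `x`, in the direction `e`, of the family `φ`: the quadratic form
`⟨ρ(x) e, e⟩` of the matrix density `ρ(x) = ∑ₙ φₙ(x) φₙ(x)*`. -/
noncomputable def directionalDensity (φ : ι → ℝ → κ → ℂ) (x : ℝ) (e : κ → ℂ) : ℝ :=
  ∑ n, ‖φ n x ⬝ᵥ star e‖ ^ 2

/-- The column `y ↦ k(y, x) e` of the reproducing kernel `k(y, x) = ∑ₙ φₙ(y) φₙ(x)*` of the span
of the family `φ`. -/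
noncomputable def kernelSection (φ : ι → ℝ → κ → ℂ) (x : ℝ) (e : κ → ℂ) : ℝ → κ → ℂ :=
  fun y => ∑ n, (e ⬝ᵥ star (φ n x)) • φ n y

variable {φ : ι → ℝ → κ → ℂ}

lemma directionalDensity_nonneg (x : ℝ) (e : κ → ℂ) : 0 ≤ directionalDensity φ x e :=
  Finset.sum_nonneg fun _ _ => sq_nonneg _

lemma dotProduct_star_mul_dotProduct_star (v w : κ → ℂ) :
    (v ⬝ᵥ star w) * (w ⬝ᵥ star v) = ((‖w ⬝ᵥ star v‖ ^ 2 : ℝ) : ℂ) := by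
  rw [dotProduct_star v w, RCLike.star_def, Complex.conj_mul', Complex.ofReal_pow]

lemma isZeroMeanPeriodic_kernelSection (hφ : ∀ n, IsZeroMeanPeriodic (φ n)) (x : ℝ)
    (e : κ → ℂ) : IsZeroMeanPeriodic (kernelSection φ x e) :=
  IsZeroMeanPeriodic.sum fun n =>
    (hφ n).clm_comp ((e ⬝ᵥ star (φ n x)) • ContinuousLinearMap.id ℝ (κ → ℂ))

lemma kernelSection_dotProduct_star (x : ℝ) (e : κ → ℂ) :
    kernelSection φ x e x ⬝ᵥ star e = (directionalDensity φ x e : ℂ) := by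
  simp only [kernelSection, directionalDensity, sum_dotProduct, smul_dotProduct, smul_eq_mul,
    dotProduct_star_mul_dotProduct_star, Complex.ofReal_sum]

lemma circleInner_kernelSection_self [DecidableEq ι] (hcont : ∀ n, Continuous (φ n))
    (hφ : IsCircleOrthonormal φ) (x : ℝ) (e : κ → ℂ) :
    circleInner (kernelSection φ x e) (kernelSection φ x e) = (directionalDensity φ x e : ℂ) := by
  unfold kernelSection
  rw [circleInner_sum_smul _ hcont]
  simp only [hφ _ _, mul_ite, mul_one, mul_zero, Finset.sum_ite_eq, Finset.mem_univ, if_true,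
    ← dotProduct_star, dotProduct_star_mul_dotProduct_star, directionalDensity,
    Complex.ofReal_sum]

lemma energyForm_kernelSection_self (hφ : ∀ n, ContDiff ℝ 1 (φ n)) (x : ℝ) (e : κ → ℂ) :
    energyForm δ (kernelSection φ x e) (kernelSection φ x e)
      = ∑ n, ∑ m, energyForm δ (φ n) (φ m) * ((φ m x ⬝ᵥ star e) * (e ⬝ᵥ star (φ n x))) := by
  unfold kernelSection
  rw [energyForm_sum_smul _ _ hφ]
  simp only [← dotProduct_star]
  exact Finset.sum_congr rfl fun n _ => Finset.sum_congr rfl fun m _ => by ring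

/-- The Eden–Foias trick: interpolate the kernel section itself, whose `L²` norm and value at `x`
are both governed by the density. -/
lemma directionalDensity_pow_three_le [DecidableEq ι] (hδ : δ < 1)
    (hφ : ∀ n, IsZeroMeanPeriodic (φ n)) (hortho : IsCircleOrthonormal φ) (x : ℝ) {e : κ → ℂ}
    (he : ∑ j, ‖e j‖ ^ 2 = 1) :
    directionalDensity φ x e ^ 3
      ≤ K2 δ ^ 2 * (energyForm δ (kernelSection φ x e) (kernelSection φ x e)).re := by
  refine cube_le_of_forall_sq_le (directionalDensity_nonneg x e) (K2_pos hδ) fun s hs => ?_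
  have hinterp := (isZeroMeanPeriodic_kernelSection hφ x e).sum_sq_norm_apply_le hδ hs x
  rw [circleInner_kernelSection_self (fun n => (hφ n).contDiff.continuous) hortho,
    Complex.ofReal_re] at hinterp
  calc directionalDensity φ x e ^ 2 = ‖kernelSection φ x e x ⬝ᵥ star e‖ ^ 2 := by
        rw [kernelSection_dotProduct_star, Complex.norm_real, Real.norm_eq_abs, sq_abs]
    _ ≤ ∑ j, ‖kernelSection φ x e x j‖ ^ 2 := by
        simpa only [he, mul_one] using sq_norm_dotProduct_star_le (kernelSection φ x e x) e
    _ ≤ K2 δ / 2 * ((energyForm δ (kernelSection φ x e) (kernelSection φ x e)).re / s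
          + s * directionalDensity φ x e) := hinterp

end EdenFoias

section Spectral

open Matrix

variable {κ : Type*} [Fintype κ] [DecidableEq κ] {A : Matrix κ κ ℂ}

lemma sum_sq_norm_eigenvectorBasis (hA : A.IsHermitian) (i : κ) :
    ∑ j, ‖hA.eigenvectorBasis i j‖ ^ 2 = 1 := by
  rw [← EuclideanSpace.norm_sq_eq, hA.eigenvectorBasis.norm_eq_one, one_pow]

lemma sum_dotProduct_eigenvectorBasis_mul (hA : A.IsHermitian) (v w : κ → ℂ) :
    ∑ i, (v ⬝ᵥ star ⇑(hA.eigenvectorBasis i)) * (⇑(hA.eigenvectorBasis i) ⬝ᵥ star w)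
      = v ⬝ᵥ star w := by
  have hparseval := hA.eigenvectorBasis.sum_inner_mul_inner (WithLp.toLp 2 w) (WithLp.toLp 2 v)
  simp only [EuclideanSpace.inner_eq_star_dotProduct] at hparseval
  simpa only [mul_comm] using hparseval

lemma dotProduct_star_self_eq_sum (hA : A.IsHermitian) (v : κ → ℂ) :
    v ⬝ᵥ star v = ((∑ i, ‖v ⬝ᵥ star ⇑(hA.eigenvectorBasis i)‖ ^ 2 : ℝ) : ℂ) := by
  rw [← sum_dotProduct_eigenvectorBasis_mul hA, Complex.ofReal_sum]
  simp only [mul_comm (v ⬝ᵥ _), dotProduct_star_mul_dotProduct_star]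

lemma mulVec_dotProduct_star_self_eq_sum (hA : A.IsHermitian) (v : κ → ℂ) :
    A *ᵥ v ⬝ᵥ star v
      = ((∑ i, hA.eigenvalues i * ‖v ⬝ᵥ star ⇑(hA.eigenvectorBasis i)‖ ^ 2 : ℝ) : ℂ) := by
  have heig (i : κ) : A *ᵥ v ⬝ᵥ star ⇑(hA.eigenvectorBasis i)
      = hA.eigenvalues i * (v ⬝ᵥ star ⇑(hA.eigenvectorBasis i)) := by
    have hleft := congrArg star (hA.mulVec_eigenvectorBasis i)
    rw [star_mulVec, hA.eq, star_smul, star_trivial (hA.eigenvalues i)] at hleft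
    rw [dotProduct_comm, dotProduct_mulVec, hleft, smul_dotProduct, Complex.real_smul,
      dotProduct_comm v]
  rw [← sum_dotProduct_eigenvectorBasis_mul hA, Complex.ofReal_sum]
  simp only [heig, mul_assoc, mul_comm (v ⬝ᵥ _), dotProduct_star_mul_dotProduct_star,
    Complex.ofReal_mul]

open scoped Matrix.Norms.L2Operator in
lemma continuous_sum_eigenvalues {X : Type*} [TopologicalSpace X] {V : X → Matrix κ κ ℂ}
    (hV_cont : Continuous V) (hV : ∀ x, (V x).IsHermitian) {f : ℝ → ℝ} (hf : Continuous f) :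
    Continuous fun x => ∑ i, f ((hV x).eigenvalues i) := by
  have hcfc : Continuous fun x => cfc f (V x) :=
    Continuous.cfc_of_mem_nhdsSet (s := Set.univ) f Filter.univ_mem hV_cont hV hf.continuousOn
  convert Complex.continuous_re.comp hcfc.matrix_trace using 2 with x
  rw [Function.comp_apply, (hV x).cfc_eq, Matrix.IsHermitian.cfc, Unitary.conjStarAlgAut_apply,
    Matrix.trace_mul_cycle]
  simp [Matrix.trace]

end Spectral

section BoundState

open Matrix

/-- `g` solves the eigenvalue equation `-g'' - δ g - P(V P g) = -μ g` classically, is `2π`-periodic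
and has zero mean. -/
structure IsBoundState {M : ℕ} (δ : ℝ) (V : ℝ → Matrix (Fin M) (Fin M) ℂ) (μ : ℝ)
    (g : ℝ → Fin M → ℂ) : Prop where
  contDiff : ContDiff ℝ 2 g
  periodic : g.Periodic (2 * π)
  integral_eq_zero : ∫ x in 0..2 * π, g x = 0
  eigen_eq : ∀ x, -(deriv (deriv g) x) - δ • g x - projP (fun t => V t *ᵥ projP g t) x = (-μ) • g x

namespace IsBoundState

variable {M : ℕ} {δ μ : ℝ} {V : ℝ → Matrix (Fin M) (Fin M) ℂ} {g : ℝ → Fin M → ℂ}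

lemma isZeroMeanPeriodic (hg : IsBoundState δ V μ g) : IsZeroMeanPeriodic g :=
  ⟨hg.contDiff.of_le one_le_two, hg.periodic, hg.integral_eq_zero⟩

lemma deriv_deriv_eq (hg : IsBoundState δ V μ g) (x : ℝ) :
    deriv (deriv g) x = (μ - δ) • g x - V x *ᵥ g x
      + (1 / (2 * π)) • ∫ t in 0..2 * π, V t *ᵥ g t := by
  have hproj : projP g = g := funext fun x => by simp [projP, hg.integral_eq_zero]
  have heig := hg.eigen_eq x
  rw [hproj, projP] at heig
  linear_combination (norm := module) -heig

lemma energyForm_self (hV : Continuous V) (hg : IsBoundState δ V μ g) :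
    energyForm δ g g = circleInner (fun x => V x *ᵥ g x) g - μ * circleInner g g := by
  have hg_cont := hg.contDiff.continuous
  have hVg : Continuous fun x => V x *ᵥ g x := hV.matrix_mulVec hg_cont
  obtain ⟨c, hc⟩ : ∃ c, ∀ x, deriv (deriv g) x = (μ - δ) • g x - V x *ᵥ g x + c :=
    ⟨_, hg.deriv_deriv_eq⟩
  have hconst : circleInner (fun _ => c) g = 0 := by
    rw [circleInner_const_left c hg_cont, hg.integral_eq_zero, star_zero, dotProduct_zero]
  have hint_g : IntervalIntegrable (fun x => (μ - δ) • (g x ⬝ᵥ star (g x))) volume 0 (2 * π) :=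
    (intervalIntegrable_dotProduct_star hg_cont hg_cont).smul (μ - δ)
  have hint_Vg := intervalIntegrable_dotProduct_star hVg hg_cont
  have hint_c := intervalIntegrable_dotProduct_star (continuous_const (y := c)) hg_cont
  have hweak : circleInner (deriv (deriv g)) g
      = (μ - δ) * circleInner g g - circleInner (fun x => V x *ᵥ g x) g := by
    rw [← add_zero (_ - _), ← hconst]
    simp only [circleInner, hc, add_dotProduct, sub_dotProduct, smul_dotProduct]
    rw [intervalIntegral.integral_add (hint_g.sub hint_Vg) hint_c,
      intervalIntegral.integral_sub hint_g hint_Vg, intervalIntegral.integral_smul]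
    simp
  have hparts := circleInner_deriv_left hg.contDiff.deriv' (hg.contDiff.of_le one_le_two)
    (periodic_deriv hg.periodic) hg.periodic
  rw [energyForm]
  linear_combination hparts - hweak

end IsBoundState

end BoundState

section SumOfEigenvalues

open Matrix

lemma mul_sub_cube_div_sq_le (w : ℝ) {ρ K : ℝ} (hρ : 0 ≤ ρ) (hK : 0 < K) :
    w * ρ - ρ ^ 3 / K ^ 2 ≤ 2 * K / (3 * √3) * max w 0 ^ (3 / 2 : ℝ) := by
  obtain ⟨r, hr, hwr⟩ : ∃ r : ℝ, 0 ≤ r ∧ max w 0 = r ^ 2 :=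
    ⟨√(max w 0), Real.sqrt_nonneg _, (Real.sq_sqrt (le_max_right _ _)).symm⟩
  have hpow : max w 0 ^ (3 / 2 : ℝ) = r ^ 3 := by
    rw [hwr, ← Real.rpow_natCast_mul hr, ← Real.rpow_natCast]
    norm_num
  have hsqrt : √3 ^ 2 = 3 := Real.sq_sqrt zero_le_three
  obtain ⟨t, ht, rfl⟩ : ∃ t : ℝ, 0 ≤ t ∧ r = √3 * t / K :=
    ⟨K * r / √3, by positivity, by field_simp⟩
  have hyoung : 3 * t ^ 2 * ρ ≤ ρ ^ 3 + 2 * t ^ 3 := by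
    nlinarith [mul_nonneg (sq_nonneg (ρ - t)) (by positivity : 0 ≤ ρ + 2 * t)]
  calc w * ρ - ρ ^ 3 / K ^ 2 ≤ max w 0 * ρ - ρ ^ 3 / K ^ 2 := by
        gcongr
        exact le_max_left w 0
    _ = (3 * t ^ 2 * ρ - ρ ^ 3) / K ^ 2 := by
        rw [hwr, div_pow, mul_pow, hsqrt]
        ring
    _ ≤ 2 * t ^ 3 / K ^ 2 := by
        gcongr
        linarith
    _ = 2 * K / (3 * √3) * max w 0 ^ (3 / 2 : ℝ) := by
        rw [hpow]
        field_simp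
        rw [hsqrt]

lemma continuous_sum_max_eigenvalues_sub_rpow {X κ : Type*} [TopologicalSpace X] [Fintype κ]
    [DecidableEq κ] {V : X → Matrix κ κ ℂ} (hV_cont : Continuous V)
    (hV : ∀ x, (V x).IsHermitian) (τ : ℝ) {b : ℝ} (hb : 0 ≤ b) :
    Continuous fun x => ∑ i, max ((hV x).eigenvalues i - τ) 0 ^ b :=
  continuous_sum_eigenvalues hV_cont hV (f := fun t => max (t - τ) 0 ^ b)
    (Continuous.rpow_const (by fun_prop) fun _ => Or.inr hb)

variable {κ ι : Type*} [Fintype κ] [Fintype ι] {δ : ℝ}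

/-- The density at `x` of the trace of `(V - τ) - (-d²/dx² - δ)` compressed to the span of the
orthonormal family `φ`. -/
noncomputable def excessDensity (δ : ℝ) (V : ℝ → Matrix κ κ ℂ) (φ : ι → ℝ → κ → ℂ) (τ x : ℝ) : ℂ :=
  ∑ n, V x *ᵥ φ n x ⬝ᵥ star (φ n x) - τ * ∑ n, φ n x ⬝ᵥ star (φ n x)
    - ∑ n, ∑ m, energyForm δ (φ n) (φ m) * (φ m x ⬝ᵥ star (φ n x))

variable {V : ℝ → Matrix κ κ ℂ} {φ : ι → ℝ → κ → ℂ}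

lemma continuous_excessDensity (hV : Continuous V) (hφ : ∀ n, Continuous (φ n)) (τ : ℝ) :
    Continuous (excessDensity δ V φ τ) := by
  have hdot (n m : ι) : Continuous fun x => φ n x ⬝ᵥ star (φ m x) :=
    (hφ n).dotProduct (hφ m).star
  have hVdot (n : ι) : Continuous fun x => V x *ᵥ φ n x ⬝ᵥ star (φ n x) :=
    (hV.matrix_mulVec (hφ n)).dotProduct (hφ n).star
  exact ((continuous_finsetSum _ fun n _ => hVdot n).sub
    (continuous_const.mul (continuous_finsetSum _ fun n _ => hdot n n))).sub
    (continuous_finsetSum _ fun n _ => continuous_finsetSum _ fun m _ =>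
      continuous_const.mul (hdot m n))

lemma excessDensity_eq_sum [DecidableEq κ] (hφ : ∀ n, ContDiff ℝ 1 (φ n)) (τ : ℝ) {x : ℝ}
    (hV : (V x).IsHermitian) :
    excessDensity δ V φ τ x
      = ∑ i, (((hV.eigenvalues i - τ) * directionalDensity φ x (hV.eigenvectorBasis i) : ℝ)
        - energyForm δ (kernelSection φ x (hV.eigenvectorBasis i))
          (kernelSection φ x (hV.eigenvectorBasis i))) := by
  have henergy : ∑ i, energyForm δ (kernelSection φ x (hV.eigenvectorBasis i))
      (kernelSection φ x (hV.eigenvectorBasis i))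
      = ∑ n, ∑ m, energyForm δ (φ n) (φ m) * (φ m x ⬝ᵥ star (φ n x)) := by
    simp only [energyForm_kernelSection_self hφ]
    rw [Finset.sum_comm]
    refine Finset.sum_congr rfl fun n _ => ?_
    rw [Finset.sum_comm]
    simp only [← Finset.mul_sum, sum_dotProduct_eigenvectorBasis_mul hV]
  have hpotential : ∑ n, V x *ᵥ φ n x ⬝ᵥ star (φ n x) = ((∑ i, hV.eigenvalues i *
      directionalDensity φ x (hV.eigenvectorBasis i) : ℝ) : ℂ) := by
    simp only [mulVec_dotProduct_star_self_eq_sum hV, directionalDensity, Finset.mul_sum,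
      ← Complex.ofReal_sum]
    rw [Finset.sum_comm]
  have hmass : ∑ n, φ n x ⬝ᵥ star (φ n x)
      = ((∑ i, directionalDensity φ x (hV.eigenvectorBasis i) : ℝ) : ℂ) := by
    simp only [dotProduct_star_self_eq_sum hV, directionalDensity, ← Complex.ofReal_sum]
    rw [Finset.sum_comm]
  rw [excessDensity, ← henergy, hpotential, hmass, Finset.sum_sub_distrib]
  simp only [sub_mul, Complex.ofReal_sub, Complex.ofReal_mul, Complex.ofReal_sum,
    Finset.sum_sub_distrib, Finset.mul_sum]

lemma re_excessDensity_le [DecidableEq κ] [DecidableEq ι] (hδ : δ < 1)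
    (hφ : ∀ n, IsZeroMeanPeriodic (φ n)) (hortho : IsCircleOrthonormal φ) (τ : ℝ) {x : ℝ}
    (hV : (V x).IsHermitian) :
    (excessDensity δ V φ τ x).re
      ≤ 2 * K2 δ / (3 * √3) * ∑ i, max (hV.eigenvalues i - τ) 0 ^ (3 / 2 : ℝ) := by
  have hK := K2_pos hδ
  rw [excessDensity_eq_sum (fun n => (hφ n).contDiff) τ hV, Complex.re_sum, Finset.mul_sum]
  refine Finset.sum_le_sum fun i _ => le_trans ?_ (mul_sub_cube_div_sq_le _
    (directionalDensity_nonneg (φ := φ) x (hV.eigenvectorBasis i)) hK)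
  rw [Complex.sub_re, Complex.ofReal_re]
  gcongr
  rw [div_le_iff₀' (by positivity)]
  exact directionalDensity_pow_three_le hδ hφ hortho x (sum_sq_norm_eigenvectorBasis hV i)

end SumOfEigenvalues

section RieszMeans

open Matrix

variable {M : ℕ} {ι : Type*} [Fintype ι] [DecidableEq ι] {δ : ℝ}
  {V : ℝ → Matrix (Fin M) (Fin M) ℂ} {φ : ι → ℝ → Fin M → ℂ} {μ : ι → ℝ}

lemma integral_excessDensity (hV : Continuous V) (hφ : ∀ n, IsBoundState δ V (μ n) (φ n))
    (hortho : IsCircleOrthonormal φ) (τ : ℝ) :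
    ∫ x in 0..2 * π, excessDensity δ V φ τ x = ((∑ n, (μ n - τ) : ℝ) : ℂ) := by
  have hcont (n : ι) := (hφ n).contDiff.continuous
  have hdot (n m : ι) : Continuous fun x => φ n x ⬝ᵥ star (φ m x) :=
    (hcont n).dotProduct (hcont m).star
  have hVdot (n : ι) : Continuous fun x => V x *ᵥ φ n x ⬝ᵥ star (φ n x) :=
    (hV.matrix_mulVec (hcont n)).dotProduct (hcont n).star
  have hpotential : ∫ x in 0..2 * π, ∑ n, V x *ᵥ φ n x ⬝ᵥ star (φ n x)
      = ∑ n, circleInner (fun x => V x *ᵥ φ n x) (φ n) :=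
    intervalIntegral.integral_finsetSum fun n _ => (hVdot n).intervalIntegrable _ _
  have hmass : ∫ x in 0..2 * π, ∑ n, φ n x ⬝ᵥ star (φ n x) = ∑ n, circleInner (φ n) (φ n) :=
    intervalIntegral.integral_finsetSum fun n _ => (hdot n n).intervalIntegrable _ _
  have henergy : ∫ x in 0..2 * π, ∑ n, ∑ m, energyForm δ (φ n) (φ m) * (φ m x ⬝ᵥ star (φ n x))
      = ∑ n, ∑ m, energyForm δ (φ n) (φ m) * circleInner (φ m) (φ n) := by
    rw [intervalIntegral.integral_finsetSum fun n _ =>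
      Continuous.intervalIntegrable (by fun_prop) _ _]
    refine Finset.sum_congr rfl fun n _ => ?_
    rw [intervalIntegral.integral_finsetSum fun m _ =>
      Continuous.intervalIntegrable (by fun_prop) _ _]
    simp only [intervalIntegral.integral_const_mul, circleInner]
  unfold excessDensity
  rw [intervalIntegral.integral_sub (Continuous.intervalIntegrable (by fun_prop) _ _)
      (Continuous.intervalIntegrable (by fun_prop) _ _),
    intervalIntegral.integral_sub (Continuous.intervalIntegrable (by fun_prop) _ _)
      (Continuous.intervalIntegrable (by fun_prop) _ _),
    intervalIntegral.integral_const_mul, hpotential, hmass, henergy]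
  simp only [hortho _ _, mul_ite, mul_one, mul_zero, Finset.sum_ite_eq', Finset.mem_univ, if_true,
    (hφ _).energyForm_self hV, Finset.mul_sum, ← Finset.sum_sub_distrib, Complex.ofReal_sum,
    Complex.ofReal_sub]
  exact Finset.sum_congr rfl fun n _ => by ring

lemma sum_sub_le_K2_mul_integral (hδ : δ < 1) (hV_cont : Continuous V) (hV : ∀ x, (V x).IsHermitian)
    (hφ : ∀ n, IsBoundState δ V (μ n) (φ n)) (hortho : IsCircleOrthonormal φ) (τ : ℝ) :
    ∑ n, (μ n - τ) ≤ 2 * K2 δ / (3 * √3) *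
      ∫ x in 0..2 * π, ∑ i, max ((hV x).eigenvalues i - τ) 0 ^ (3 / 2 : ℝ) := by
  have hexcess : Continuous (excessDensity δ V φ τ) :=
    continuous_excessDensity hV_cont (fun n => (hφ n).contDiff.continuous) τ
  have heigenvalues := continuous_sum_max_eigenvalues_sub_rpow hV_cont hV τ (b := 3 / 2)
    (by positivity)
  calc ∑ n, (μ n - τ) = (∫ x in 0..2 * π, excessDensity δ V φ τ x).re := by
        rw [integral_excessDensity hV_cont hφ hortho, Complex.ofReal_re]
    _ = ∫ x in 0..2 * π, (excessDensity δ V φ τ x).re :=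
        (Complex.reCLM.intervalIntegral_comp_comm (hexcess.intervalIntegrable _ _)).symm
    _ ≤ ∫ x in 0..2 * π, 2 * K2 δ / (3 * √3) *
          ∑ i, max ((hV x).eigenvalues i - τ) 0 ^ (3 / 2 : ℝ) := by
        refine intervalIntegral.integral_mono two_pi_pos.le
          ((Complex.continuous_re.comp hexcess).intervalIntegrable _ _)
          ((continuous_const.mul heigenvalues).intervalIntegrable _ _) fun x => ?_
        exact re_excessDensity_le hδ (fun n => (hφ n).isZeroMeanPeriodic) hortho τ (hV x)
    _ = _ := intervalIntegral.integral_const_mul _ _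

lemma sum_max_sub_le_K2_mul_integral (hδ : δ < 1) (hV_cont : Continuous V)
    (hV : ∀ x, (V x).IsHermitian) (hφ : ∀ n, IsBoundState δ V (μ n) (φ n))
    (hortho : IsCircleOrthonormal φ) (τ : ℝ) :
    ∑ n, max (μ n - τ) 0 ≤ 2 * K2 δ / (3 * √3) *
      ∫ x in 0..2 * π, ∑ i, max ((hV x).eigenvalues i - τ) 0 ^ (3 / 2 : ℝ) := by
  have hsubfamily := sum_sub_le_K2_mul_integral hδ hV_cont hV
    (fun n : {n // τ < μ n} => hφ n) (hortho.comp_injective Subtype.val_injective) τ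
  have hpositive_part (n : ι) : max (μ n - τ) 0 = if τ < μ n then μ n - τ else 0 := by
    split_ifs with hn
    · exact max_eq_left (sub_nonneg.2 hn.le)
    · exact max_eq_right (sub_nonpos.2 (not_lt.1 hn))
  have hsum : ∑ n, max (μ n - τ) 0 = ∑ n : {n // τ < μ n}, (μ n - τ) := by
    simp only [hpositive_part, ← Finset.sum_filter]
    exact Finset.sum_subtype _ (by simp) _
  exact hsum.trans_le hsubfamily

end RieszMeans

section AizenmanLieb

open Set ProbabilityTheory
open scoped ENNReal

lemma lintegral_rpow_mul_max_one_sub_rpow {α b : ℝ} (hα : 0 < α) (hb : 0 < b) :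
    ∫⁻ t in Ioi (0 : ℝ), ENNReal.ofReal (t ^ (α - 1) * max (1 - t) 0 ^ b)
      = ENNReal.ofReal (beta α (b + 1)) := by
  have hb' : 0 < b + 1 := by positivity
  have hbeta := beta_pos hα hb'
  have hdensity (t : ℝ) : (Ioi 0).indicator
      (fun t => ENNReal.ofReal (t ^ (α - 1) * max (1 - t) 0 ^ b)) t
      = ENNReal.ofReal (beta α (b + 1)) * betaPDF α (b + 1) t := by
    rcases le_or_gt t 0 with ht | ht
    · rw [betaPDF_eq_zero_of_nonpos ht, mul_zero, indicator_of_notMem (notMem_Ioi.2 ht)]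
    rw [indicator_of_mem (mem_Ioi.2 ht)]
    rcases lt_or_ge t 1 with ht1 | ht1
    · rw [betaPDF_of_pos_lt_one ht ht1, ← ENNReal.ofReal_mul hbeta.le,
        max_eq_left (sub_nonneg.2 ht1.le), add_sub_cancel_right]
      field_simp
    · rw [betaPDF_eq_zero_of_one_le ht1, mul_zero, max_eq_right (sub_nonpos.2 ht1),
        Real.zero_rpow hb.ne', mul_zero, ENNReal.ofReal_zero]
  rw [← lintegral_indicator measurableSet_Ioi]
  simp only [hdensity]
  rw [lintegral_const_mul' _ _ ENNReal.ofReal_ne_top, lintegral_betaPDF_eq_one hα hb', mul_one]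

lemma lintegral_Ioi_eq_mul_lintegral_comp_mul {f : ℝ → ℝ≥0∞} {v : ℝ} (hv : 0 < v) :
    ∫⁻ τ in Ioi (0 : ℝ), f τ = ENNReal.ofReal v * ∫⁻ t in Ioi (0 : ℝ), f (v * t) := by
  have himage : (fun t => v * t) '' Ioi 0 = Ioi 0 := by
    rw [image_mul_left_Ioi hv, mul_zero]
  have hsubst := lintegral_image_eq_lintegral_abs_deriv_mul (s := Ioi 0) measurableSet_Ioi
    (fun t _ => (hasDerivAt_const_mul v).hasDerivWithinAt)
    (mul_right_injective₀ hv.ne').injOn f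
  rw [himage, abs_of_pos hv] at hsubst
  rw [hsubst, lintegral_const_mul' _ _ ENNReal.ofReal_ne_top]

lemma lintegral_rpow_mul_max_sub_rpow {α b : ℝ} (hα : 0 < α) (hb : 0 < b) (v : ℝ) :
    ∫⁻ τ in Ioi (0 : ℝ), ENNReal.ofReal (τ ^ (α - 1) * max (v - τ) 0 ^ b)
      = ENNReal.ofReal (beta α (b + 1) * max v 0 ^ (α + b)) := by
  rcases le_or_gt v 0 with hv | hv
  · rw [max_eq_right hv, Real.zero_rpow (by positivity), mul_zero, ENNReal.ofReal_zero]
    refine setLIntegral_eq_zero measurableSet_Ioi fun τ hτ => ?_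
    simp only [max_eq_right (sub_nonpos.2 (hv.trans hτ.le)), Real.zero_rpow hb.ne', mul_zero,
      ENNReal.ofReal_zero, Pi.zero_apply]
  · have hscale : ∀ t ∈ Ioi (0 : ℝ), ENNReal.ofReal ((v * t) ^ (α - 1) * max (v - v * t) 0 ^ b)
        = ENNReal.ofReal (v ^ (α - 1 + b))
          * ENNReal.ofReal (t ^ (α - 1) * max (1 - t) 0 ^ b) := fun t ht => by
      have hmax : max (v - v * t) 0 = v * max (1 - t) 0 := by
        rw [mul_max_of_nonneg _ _ hv.le, mul_sub, mul_one, mul_zero]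
      rw [← ENNReal.ofReal_mul (by positivity), hmax, Real.mul_rpow hv.le ht.le,
        Real.mul_rpow hv.le (le_max_right _ _), Real.rpow_add hv]
      ring_nf
    rw [lintegral_Ioi_eq_mul_lintegral_comp_mul hv, setLIntegral_congr_fun measurableSet_Ioi hscale,
      lintegral_const_mul' _ _ ENNReal.ofReal_ne_top, lintegral_rpow_mul_max_one_sub_rpow hα hb,
      ← ENNReal.ofReal_mul (by positivity), ← ENNReal.ofReal_mul hv.le, max_eq_left hv.le,
      show α + b = 1 + (α - 1 + b) by ring, Real.rpow_add hv 1, Real.rpow_one]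
    ring_nf

lemma lintegral_rpow_mul_sum_max_sub_rpow {ι : Type*} [Fintype ι] {α b : ℝ} (hα : 0 < α)
    (hb : 0 < b) (v : ι → ℝ) :
    ∫⁻ τ in Ioi (0 : ℝ), ENNReal.ofReal (τ ^ (α - 1)) * ENNReal.ofReal (∑ i, max (v i - τ) 0 ^ b)
      = ENNReal.ofReal (beta α (b + 1) * ∑ i, max (v i) 0 ^ (α + b)) := by
  have hbeta := beta_pos hα (by positivity : 0 < b + 1)
  have hsum : ∀ τ ∈ Ioi (0 : ℝ),
      ENNReal.ofReal (τ ^ (α - 1)) * ENNReal.ofReal (∑ i, max (v i - τ) 0 ^ b)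
        = ∑ i, ENNReal.ofReal (τ ^ (α - 1) * max (v i - τ) 0 ^ b) := fun τ hτ => by
    have hτ' := Real.rpow_nonneg hτ.le (α - 1)
    rw [← ENNReal.ofReal_mul hτ', Finset.mul_sum,
      ENNReal.ofReal_sum_of_nonneg fun i _ => by positivity]
  rw [setLIntegral_congr_fun measurableSet_Ioi hsum, lintegral_finsetSum _ fun i _ => by fun_prop,
    Finset.mul_sum, ENNReal.ofReal_sum_of_nonneg fun i _ => by positivity]
  simp only [lintegral_rpow_mul_max_sub_rpow hα hb]

/-- The Aizenman–Lieb argument: integrating against `τ ^ (α - 1)` raises both exponents by `α`. -/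
lemma ofReal_sum_rpow_le_lintegral {X ι κ : Type*} [MeasurableSpace X] {ν : Measure X} [SFinite ν]
    [Fintype ι] [Fintype κ] {C : ℝ≥0∞} {α a b : ℝ} {μ : ι → ℝ} {E : X → κ → ℝ} (hC : C ≠ ∞)
    (hα : 0 < α) (ha : 0 < a) (hb : 0 < b)
    (hE : ∀ τ, Measurable fun x => ∑ i, max (E x i - τ) 0 ^ b)
    (hle : ∀ τ > 0, ENNReal.ofReal (∑ n, max (μ n - τ) 0 ^ a)
      ≤ C * ∫⁻ x, ENNReal.ofReal (∑ i, max (E x i - τ) 0 ^ b) ∂ν) :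
    ENNReal.ofReal (beta α (a + 1) * ∑ n, max (μ n) 0 ^ (α + a))
      ≤ C * ∫⁻ x, ENNReal.ofReal (beta α (b + 1) * ∑ i, max (E x i) 0 ^ (α + b)) ∂ν := by
  have hcont (x : X) : Continuous fun τ => ∑ i, max (E x i - τ) 0 ^ b :=
    continuous_finsetSum _ fun i _ =>
      Continuous.rpow_const (by fun_prop) fun _ => Or.inr hb.le
  have hmeas : Measurable fun p : ℝ × X => ∑ i, max (E p.2 i - p.1) 0 ^ b :=
    measurable_uncurry_of_continuous_of_measurable (u := fun τ x => ∑ i, max (E x i - τ) 0 ^ b)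
      hcont hE
  calc ENNReal.ofReal (beta α (a + 1) * ∑ n, max (μ n) 0 ^ (α + a))
    _ = ∫⁻ τ in Ioi (0 : ℝ),
          ENNReal.ofReal (τ ^ (α - 1)) * ENNReal.ofReal (∑ n, max (μ n - τ) 0 ^ a) :=
        (lintegral_rpow_mul_sum_max_sub_rpow hα ha μ).symm
    _ ≤ ∫⁻ τ in Ioi (0 : ℝ), C * ∫⁻ x,
          ENNReal.ofReal (τ ^ (α - 1)) * ENNReal.ofReal (∑ i, max (E x i - τ) 0 ^ b) ∂ν := by
        refine setLIntegral_mono' measurableSet_Ioi fun τ hτ => ?_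
        rw [lintegral_const_mul' _ _ ENNReal.ofReal_ne_top, mul_left_comm]
        gcongr
        exact hle τ hτ
    _ = C * ∫⁻ x, ∫⁻ τ in Ioi (0 : ℝ),
          ENNReal.ofReal (τ ^ (α - 1)) * ENNReal.ofReal (∑ i, max (E x i - τ) 0 ^ b)
          ∂volume ∂ν := by
        rw [lintegral_const_mul' _ _ hC, lintegral_lintegral_swap]
        exact (Measurable.mul (by fun_prop) hmeas.ennreal_ofReal).aemeasurable
    _ = _ := by simp only [lintegral_rpow_mul_sum_max_sub_rpow hα hb]

lemma lintegral_Ioc_ofReal {f : ℝ → ℝ} (hf : Continuous f) (hf_nonneg : ∀ x, 0 ≤ f x) {a b : ℝ}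
    (hab : a ≤ b) :
    ∫⁻ x in Ioc a b, ENNReal.ofReal (f x) = ENNReal.ofReal (∫ x in a..b, f x) := by
  rw [intervalIntegral.integral_of_le hab, ofReal_integral_eq_lintegral_ofReal hf.integrableOn_Ioc
    (Filter.Eventually.of_forall hf_nonneg)]

lemma beta_mul_sum_rpow_le_intervalIntegral {ι κ : Type*} [Fintype ι] [Fintype κ]
    {C α a b p q : ℝ} {μ : ι → ℝ} {E : ℝ → κ → ℝ} (hC : 0 ≤ C) (hα : 0 < α) (ha : 0 < a)
    (hb : 0 < b) (hpq : p ≤ q)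
    (hE : ∀ τ (c : ℝ), 0 ≤ c → Continuous fun x => ∑ i, max (E x i - τ) 0 ^ c)
    (hle : ∀ τ > 0, ∑ n, max (μ n - τ) 0 ^ a ≤ C * ∫ x in p..q, ∑ i, max (E x i - τ) 0 ^ b) :
    beta α (a + 1) * ∑ n, max (μ n) 0 ^ (α + a)
      ≤ C * (beta α (b + 1) * ∫ x in p..q, ∑ i, max (E x i) 0 ^ (α + b)) := by
  have hbeta := beta_pos hα (by positivity : 0 < b + 1)
  have hcont : Continuous fun x => beta α (b + 1) * ∑ i, max (E x i) 0 ^ (α + b) := by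
    simpa only [sub_zero] using (hE 0 (α + b) (by positivity)).const_mul (beta α (b + 1))
  have hle_lintegral : ∀ τ > 0, ENNReal.ofReal (∑ n, max (μ n - τ) 0 ^ a) ≤ ENNReal.ofReal C *
      ∫⁻ x in Ioc p q, ENNReal.ofReal (∑ i, max (E x i - τ) 0 ^ b) := fun τ hτ => by
    rw [lintegral_Ioc_ofReal (hE τ b hb.le) (fun x => by positivity) hpq, ← ENNReal.ofReal_mul hC]
    exact ENNReal.ofReal_le_ofReal (hle τ hτ)
  have hlift := ofReal_sum_rpow_le_lintegral ENNReal.ofReal_ne_top hα ha hb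
    (fun τ => (hE τ b hb.le).measurable) hle_lintegral
  rw [lintegral_Ioc_ofReal hcont (fun x => by positivity) hpq, ← ENNReal.ofReal_mul hC,
    intervalIntegral.integral_const_mul] at hlift
  refine (ENNReal.ofReal_le_ofReal_iff (mul_nonneg hC (mul_nonneg hbeta.le ?_))).1 hlift
  exact intervalIntegral.integral_nonneg hpq fun x _ => by positivity

end AizenmanLieb

section SemiclassicalConstant

open ProbabilityTheory

/-- The one-dimensional semiclassical Lieb–Thirring constant `L^cl_{γ,1}`. -/
noncomputable def semiclassicalConstant (γ : ℝ) : ℝ :=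
  Gamma (γ + 1) / (2 * √π * Gamma (γ + 3 / 2))

lemma semiclassicalConstant_one : semiclassicalConstant 1 = 2 / (3 * π) := by
  have hGamma : Gamma (1 + 3 / 2) = 3 / 4 * √π := by
    rw [show (1 + 3 / 2 : ℝ) = 1 / 2 + 1 + 1 by norm_num, Real.Gamma_add_one (by norm_num),
      Real.Gamma_add_one (by norm_num), Real.Gamma_one_half_eq]
    ring
  have hsqrt : √π ^ 2 = π := Real.sq_sqrt pi_pos.le
  rw [semiclassicalConstant, hGamma, one_add_one_eq_two, Real.Gamma_two]
  field_simp
  linear_combination -4 * hsqrt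

lemma semiclassicalConstant_mul_beta {γ₀ α : ℝ} (hγ₀ : -1 < γ₀) (hα : 0 < α) :
    semiclassicalConstant γ₀ * beta α (γ₀ + 3 / 2)
      = beta α (γ₀ + 1) * semiclassicalConstant (α + γ₀) := by
  have hleft : Gamma (γ₀ + 3 / 2) ≠ 0 := (Real.Gamma_pos_of_pos (by linarith)).ne'
  have hright : Gamma (α + γ₀ + 1) ≠ 0 := (Real.Gamma_pos_of_pos (by linarith)).ne'
  simp only [semiclassicalConstant, beta, ← add_assoc]
  generalize Gamma (γ₀ + 3 / 2) = x at *
  generalize Gamma (α + γ₀ + 3 / 2) = y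
  field_simp

end SemiclassicalConstant

section LiebThirring

open Matrix ProbabilityTheory

variable {M : ℕ} {ι : Type*} [Fintype ι] [DecidableEq ι] {δ γ : ℝ}
  {V : ℝ → Matrix (Fin M) (Fin M) ℂ} {φ : ι → ℝ → Fin M → ℂ} {μ : ι → ℝ}

lemma sum_max_sub_le_semiclassicalConstant_mul_integral (hδ : δ < 1) (hV_cont : Continuous V)
    (hV : ∀ x, (V x).IsHermitian) (hφ : ∀ n, IsBoundState δ V (μ n) (φ n))
    (hortho : IsCircleOrthonormal φ) (τ : ℝ) :
    ∑ n, max (μ n - τ) 0 ≤ π / √3 * K2 δ * semiclassicalConstant 1 *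
      ∫ x in 0..2 * π, ∑ i, max ((hV x).eigenvalues i - τ) 0 ^ (3 / 2 : ℝ) := by
  have hconst : π / √3 * K2 δ * semiclassicalConstant 1 = 2 * K2 δ / (3 * √3) := by
    rw [semiclassicalConstant_one]
    field_simp
  exact hconst ▸ sum_max_sub_le_K2_mul_integral hδ hV_cont hV hφ hortho τ

theorem stmt_16_general (hδ : δ < 1) (hγ : 1 ≤ γ) (hV_cont : Continuous V)
    (hV : ∀ x, (V x).IsHermitian) (hφ : ∀ n, IsBoundState δ V (μ n) (φ n))
    (hortho : IsCircleOrthonormal φ) :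
    ∑ n, max (μ n) 0 ^ γ ≤ π / √3 * K2 δ * semiclassicalConstant γ *
      ∫ x in 0..2 * π, ∑ i, max ((hV x).eigenvalues i) 0 ^ (γ + 1 / 2) := by
  rcases hγ.eq_or_lt with rfl | hγ
  · have hone := sum_max_sub_le_semiclassicalConstant_mul_integral hδ hV_cont hV hφ hortho 0
    rw [show (1 : ℝ) + 1 / 2 = 3 / 2 by norm_num]
    simpa only [sub_zero, Real.rpow_one] using hone
  · obtain ⟨α, hα, rfl⟩ : ∃ α > 0, γ = α + 1 := ⟨γ - 1, sub_pos.2 hγ, by ring⟩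
    have hC : 0 ≤ π / √3 * K2 δ * semiclassicalConstant 1 := by
      have hK := K2_pos hδ
      rw [semiclassicalConstant_one]
      positivity
    have hlift := beta_mul_sum_rpow_le_intervalIntegral hC hα one_pos (b := 3 / 2) (by norm_num)
      two_pi_pos.le (fun τ _ => continuous_sum_max_eigenvalues_sub_rpow hV_cont hV τ)
      fun τ _ => by simpa only [Real.rpow_one] using
        sum_max_sub_le_semiclassicalConstant_mul_integral hδ hV_cont hV hφ hortho τ
    have hconst := semiclassicalConstant_mul_beta (γ₀ := 1) (by norm_num) hα
    rw [show (3 / 2 + 1 : ℝ) = 1 + 3 / 2 by ring] at hlift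
    refine le_of_mul_le_mul_left (hlift.trans_eq ?_) (beta_pos hα (by norm_num : (0 : ℝ) < 1 + 1))
    rw [show α + 1 + 1 / 2 = α + 3 / 2 by ring]
    linear_combination (π / √3 * K2 δ *
      ∫ x in 0..2 * π, ∑ i, max ((hV x).eigenvalues i) 0 ^ (α + 3 / 2)) * hconst

end LiebThirring

theorem stmt_16 (δ : ℝ) (hδ0 : 0 ≤ δ) (hδ1 : δ < 1)
    (γ : ℝ) (hγ : 1 ≤ γ) (M N : ℕ) (hM : 1 ≤ M)
    (V : ℝ → Matrix (Fin M) (Fin M) ℂ) (hVc : Continuous V)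
    (hVper : Function.Periodic V (2 * π)) (hV : ∀ x, (V x).PosSemidef)
    (φ : Fin N → ℝ → Fin M → ℂ) (hφ : ∀ n, ContDiff ℝ 2 (φ n))
    (hper : ∀ n, Function.Periodic (φ n) (2 * π))
    (hmean : ∀ n, (∫ t in (0:ℝ)..(2 * π), φ n t) = 0)
    (hortho : ∀ n m, (∫ x in (0:ℝ)..(2 * π), ∑ j, φ n x j * (starRingEnd ℂ) (φ m x j)) =
      if n = m then 1 else 0)
    (μ : Fin N → ℝ) (hμ : ∀ n, 0 < μ n)
    (heig : ∀ n x, -(deriv (deriv (φ n)) x) - δ • φ n x -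
        projP (fun t => (V t).mulVec (projP (φ n) t)) x = (-(μ n)) • φ n x) :
    ∑ n, μ n ^ γ ≤ (π / Real.sqrt 3) * K2 δ *
      (Real.Gamma (γ + 1) / (2 * Real.sqrt π * Real.Gamma (γ + 3 / 2))) *
      ∫ x in (0:ℝ)..(2 * π), ∑ i, (hV x).1.eigenvalues i ^ (γ + 1 / 2) := by
  simpa only [semiclassicalConstant, max_eq_left (hμ _).le,
    max_eq_left ((hV _).eigenvalues_nonneg _)] using
    stmt_16_general hδ1 hγ hVc (fun x => (hV x).1)
      (fun n => ⟨hφ n, hper n, hmean n, heig n⟩) hortho
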